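/- Let R be a connected reduced order with universal grading (Γ, (R_γ)_{γ∈Γ}) and degree map d: μ(R) → Γ. Let Id₀(d) = {f ∈ Hom(Γ, μ(R)) : f∘d∘f = f}, partially ordered by f ≤ g if and only if f∘d∘g = f and g∘d∘f = f. Then the map Φ sending f ∈ Id₀(d) to the pair (⊕_{γ∈ker f} R_γ, f(Γ)) is well defined (i.e., Φ(f) ∈ GpRg(R) for every f ∈ Id₀(d)) and is an isomorphism of partially ordered sets from Id₀(d) onto GpRg(R). -/

import Mathlib

/-- The natural ring homomorphism `A[G] → R` for a subring `A ⊆ R` and a subgroup `G ⊆ Rˣ`. -/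
noncomputable def gpRgHom {R : Type*} [CommRing R] (A : Subring R) (G : Subgroup Rˣ) :
    MonoidAlgebra A G →+* R :=
  MonoidAlgebra.liftNCRingHom A.subtype ((Units.coeHom R).comp G.subtype)
    (fun _ _ => Commute.all _ _)

/-- `A[G] = R`: the natural map `A[G] → R` is a ring isomorphism. -/
def IsGpRg {R : Type*} [CommRing R] (A : Subring R) (G : Subgroup Rˣ) : Prop :=
  Function.Bijective (gpRgHom A G)

/-- A commutative ring is connected if it is non-zero and `0`, `1` are its only idempotents. -/
def IsConnectedRing (R : Type*) [CommRing R] : Prop :=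
  Nontrivial R ∧ ∀ e : R, IsIdempotentElem e → e = 0 ∨ e = 1

/-- A grading of a commutative ring `R` by a (multiplicatively written) abelian group `Δ`:
a `Δ`-indexed internal direct sum decomposition of `R` into additive subgroups such that
`R_γ · R_δ ⊆ R_{γδ}`. -/
structure Grading (R : Type u) [CommRing R] (Δ : Type v) [CommGroup Δ] where
  comp : Δ → AddSubgroup R
  mul_mem : ∀ ⦃γ δ : Δ⦄ ⦃x y : R⦄, x ∈ comp γ → y ∈ comp δ → x * y ∈ comp (γ * δ)
  isInternal : letI := Classical.decEq Δ; DirectSum.IsInternal comp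

/-- A grading is universal if every grading of `R` is obtained from it by pushforward
(`S_ε = Σ_{δ ∈ f⁻¹(ε)} R_δ`) along a unique group homomorphism. -/
def Grading.IsUniversal {R : Type u} [CommRing R] {Δ : Type v} [CommGroup Δ]
    (g : Grading R Δ) : Prop :=
  ∀ (E : Type v) (_ : CommGroup E) (s : Grading R E),
    ∃! f : Δ →* E, ∀ ε : E, s.comp ε = ⨆ δ ∈ f ⁻¹' {ε}, g.comp δ


section helpers

variable {R : Type u} [CommRing R]

theorem isInternal_of_proj {E : Type*} [DecidableEq E] (C : E → AddSubgroup R)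
    (π : E → R →+ R) (h1 : ∀ ε, ∀ x ∈ C ε, π ε x = x)
    (h2 : ∀ ε ε', ε' ≠ ε → ∀ x ∈ C ε', π ε x = 0) (hs : iSup C = ⊤) :
    DirectSum.IsInternal C := by
  constructor
  · rw [injective_iff_map_eq_zero]
    intro v hv
    have key : ∀ ε, ∀ v : DirectSum E (fun i => C i),
        (π ε) (DirectSum.coeAddMonoidHom C v) = v ε := by
      intro ε v
      induction v using DirectSum.induction_on with
      | zero => simp
      | of i x =>
        rw [DirectSum.coeAddMonoidHom_of]
        by_cases h : i = ε
        · subst h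
          rw [h1 i x x.2, DirectSum.of_eq_same]
        · rw [h2 ε i h x x.2, DirectSum.of_eq_of_ne _ _ _ (Ne.symm h)]
          simp
      | add x y hx hy => simp [hx, hy]
    ext ε
    rw [← key ε v, hv]
    simp
  · intro x
    have hx : x ∈ iSup C := by rw [hs]; trivial
    have : iSup C ≤ (DirectSum.coeAddMonoidHom C).range := by
      refine iSup_le fun ε y hy => ⟨DirectSum.of (fun i => C i) ε ⟨y, hy⟩, ?_⟩
      rw [DirectSum.coeAddMonoidHom_of]
    exact this hx

theorem Grading.exists_proj {Γ : Type*} [CommGroup Γ] (gr : Grading R Γ) (P : Γ → Prop) :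
    ∃ p : R →+ R, (∀ γ, P γ → ∀ x ∈ gr.comp γ, p x = x) ∧
      (∀ γ, ¬ P γ → ∀ x ∈ gr.comp γ, p x = 0) := by
  classical
  have hi : DirectSum.IsInternal gr.comp := by convert gr.isInternal
  let _ := hi.chooseDecomposition
  let q : (DirectSum Γ fun i => gr.comp i) →+ R :=
    DirectSum.toAddMonoid fun i => if P i then (gr.comp i).subtype else 0
  refine ⟨q.comp (DirectSum.decomposeAddEquiv gr.comp).toAddMonoidHom, ?_, ?_⟩
  · intro γ h x hx
    simp [q, DirectSum.decompose_of_mem _ hx, h]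
  · intro γ h x hx
    simp [q, DirectSum.decompose_of_mem _ hx, h]

theorem Grading.iSup_eq_top {Γ : Type*} [CommGroup Γ] (gr : Grading R Γ) :
    iSup gr.comp = ⊤ := by
  classical
  have hi : DirectSum.IsInternal gr.comp := by convert gr.isInternal
  rw [eq_top_iff]
  intro x _
  obtain ⟨v, rfl⟩ := hi.2 x
  induction v using DirectSum.induction_on with
  | zero => simp
  | of i x =>
    rw [DirectSum.coeAddMonoidHom_of]
    exact AddSubgroup.mem_iSup_of_mem i x.2
  | add x y hx hy =>
    rw [map_add]
    exact add_mem (hx trivial) (hy trivial)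

theorem proj_of_mem {Γ : Type*} {C : Γ → AddSubgroup R} {P : Γ → Prop} {p q : R →+ R}
    (hp : ∀ γ, P γ → ∀ x ∈ C γ, p x = q x) {x : R}
    (hx : x ∈ (⨆ γ, ⨆ (_ : P γ), C γ : AddSubgroup R)) : p x = q x := by
  have : (⨆ γ, ⨆ (_ : P γ), C γ : AddSubgroup R) ≤ AddMonoidHom.eqLocus p q :=
    iSup₂_le fun γ h y hy => hp γ h y hy
  exact this hx

/-- The trivial grading. -/
theorem exists_trivial_grading (E : Type*) [CommGroup E] :
    ∃ s : Grading R E, s.comp 1 = ⊤ ∧ ∀ ε, ε ≠ 1 → s.comp ε = ⊥ := by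
  classical
  refine ⟨⟨fun ε => if ε = 1 then ⊤ else ⊥, ?_, ?_⟩, by simp, by simp +contextual⟩
  · intro γ δ x y hx hy
    by_cases h : γ = 1
    · by_cases h' : δ = 1
      · simp [h, h']
      · have : y = 0 := by simpa [h'] using hy
        simp [this, zero_mem]
    · have : x = 0 := by simpa [h] using hx
      simp [this, zero_mem]
  · refine isInternal_of_proj _ (fun ε => if ε = 1 then AddMonoidHom.id R else 0) ?_ ?_ ?_
    · intro ε x hx
      by_cases h : ε = 1
      · simp [h]
      · have : x = 0 := by simpa [h] using hx
        simp [this]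
    · intro ε ε' hne x hx
      by_cases h : ε = 1
      · have h' : ε' ≠ 1 := by rw [← h]; exact hne
        have : x = 0 := by simpa [h'] using hx
        simp [this]
      · simp [h]
    · rw [eq_top_iff]
      refine le_trans ?_ (le_iSup _ (1 : E))
      simp

theorem Grading.IsUniversal.hom_ext {Γ : Type v} [CommGroup Γ] {gr : Grading R Γ}
    (hgr : gr.IsUniversal) {M : Type*} [CommGroup M] (f g : Γ →* M)
    (h : ∀ γ, gr.comp γ ≠ ⊥ → f γ = g γ) : f = g := by
  let H : Subgroup Γ := f.eqLocus g
  obtain ⟨s, hs1, hs2⟩ := exists_trivial_grading (R := R) (Γ ⧸ H)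
  obtain ⟨k, -, hk⟩ := hgr (Γ ⧸ H) inferInstance s
  have aux : ∀ k : Γ →* Γ ⧸ H, (∀ γ, gr.comp γ ≠ ⊥ → k γ = 1) →
      ∀ ε : Γ ⧸ H, s.comp ε = ⨆ δ ∈ k ⁻¹' {ε}, gr.comp δ := by
    intro k hk ε
    by_cases hε : ε = 1
    · subst hε
      rw [hs1, eq_comm, eq_top_iff, ← gr.iSup_eq_top]
      refine iSup_le fun δ => ?_
      by_cases hδ : gr.comp δ = ⊥
      · simp [hδ]
      · exact le_iSup₂_of_le δ (by simp [hk δ hδ]) le_rfl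
    · rw [hs2 ε hε, eq_comm, eq_bot_iff]
      refine iSup₂_le fun δ hδ => ?_
      by_contra hne
      have : gr.comp δ ≠ ⊥ := fun h => hne (by simp [h])
      exact hε (by rw [← hk δ this]; exact hδ.symm)
  have e1 := hk (QuotientGroup.mk' H) (aux _ fun γ hγ => by
    simpa using (show γ ∈ H from h γ hγ))
  have e2 := hk 1 (aux _ fun γ hγ => rfl)
  ext γ
  have : (QuotientGroup.mk' H) γ = 1 := by rw [e1, ← e2]; rfl
  have h3 : γ ∈ H := by simpa using this
  exact h3

theorem gpRgHom_single (A : Subring R) (G : Subgroup Rˣ) (g : G) (a : A) :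
    gpRgHom A G (MonoidAlgebra.single g a) = (a : R) * ((g : Rˣ) : R) := by
  simp [gpRgHom, MonoidAlgebra.liftNCRingHom]

theorem IsGpRg.finite [Nontrivial R] [Module.Finite ℤ R] {A : Subring R} {G : Subgroup Rˣ}
    (h : IsGpRg A G) : Finite G := by
  have : Module.Finite A R := Module.Finite.of_restrictScalars_finite ℤ A R
  have hlin : LinearIndependent A (fun g : G => ((g : Rˣ) : R)) := by
    rw [linearIndependent_iff]
    intro l hl
    have h1 : ∀ l : G →₀ A, gpRgHom A G (MonoidAlgebra.ofCoeff l) =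
        Finsupp.linearCombination A (fun g : G => ((g : Rˣ) : R)) l := by
      intro l
      induction l using Finsupp.induction_linear with
      | zero => simp
      | add f g hf hg => rw [MonoidAlgebra.ofCoeff_add, map_add, map_add, hf, hg]
      | single g a =>
        rw [Finsupp.linearCombination_single]
        exact gpRgHom_single A G g a
    have h2 : (MonoidAlgebra.ofCoeff l : MonoidAlgebra A G) = MonoidAlgebra.ofCoeff 0 := by
      apply h.1
      rw [h1, h1, hl, map_zero]
    simpa using h2
  exact hlin.finite

theorem IsGpRg.exists_grading {A : Subring R} {G : Subgroup Rˣ}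
    (h : IsGpRg A G) {E : Type*} [CommGroup E] (e : E ≃* G) :
    ∃ s : Grading R E, ∀ ε x, x ∈ s.comp ε ↔ ∃ a ∈ A, x = a * ((e ε : Rˣ) : R) := by
  classical
  let Φ := RingEquiv.ofBijective (gpRgHom A G) h
  let C : E → AddSubgroup R := fun ε =>
    A.toAddSubgroup.map (AddMonoidHom.mulRight ((e ε : Rˣ) : R))
  have hC : ∀ ε x, x ∈ C ε ↔ ∃ a ∈ A, x = a * ((e ε : Rˣ) : R) := by
    intro ε x
    simp [C, AddSubgroup.mem_map, eq_comm]
  let π : E → R →+ R := fun ε =>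
    { toFun := fun x => ((Φ.symm x).coeff (e ε) : R) * ((e ε : Rˣ) : R)
      map_zero' := by simp
      map_add' := by intro x y; simp [add_mul] }
  have hΦ : ∀ ε (a : A), Φ.symm ((a : R) * ((e ε : Rˣ) : R)) =
      MonoidAlgebra.single (e ε) a := by
    intro ε a
    rw [RingEquiv.symm_apply_eq]
    exact (gpRgHom_single A G _ _).symm
  refine ⟨⟨C, ?_, ?_⟩, hC⟩
  · intro γ δ x y hx hy
    rw [hC] at *
    obtain ⟨a, ha, rfl⟩ := hx
    obtain ⟨b, hb, rfl⟩ := hy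
    refine ⟨a * b, mul_mem ha hb, ?_⟩
    simp
    ring
  · refine isInternal_of_proj C π ?_ ?_ ?_
    · intro ε x hx
      obtain ⟨a, ha, rfl⟩ := (hC _ _).1 hx
      have := hΦ ε ⟨a, ha⟩
      simp only at this
      simp [π, this]
    · intro ε ε' hne x hx
      obtain ⟨a, ha, rfl⟩ := (hC _ _).1 hx
      have := hΦ ε' ⟨a, ha⟩
      simp only at this
      have h' : e ε' ≠ e ε := fun h => hne (e.injective h)
      simp [π, this, h']
    · rw [eq_top_iff]
      intro x _
      obtain ⟨v, rfl⟩ := h.2 x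
      induction v using MonoidAlgebra.induction_linear with
      | zero => simp
      | add f g hf hg => rw [map_add]; exact add_mem (hf trivial) (hg trivial)
      | single g a =>
        refine AddSubgroup.mem_iSup_of_mem (e.symm g) ?_
        rw [hC, gpRgHom_single]
        exact ⟨a, a.2, by simp⟩

section main

variable {Γ : Type v} [CommGroup Γ] (gr : Grading R Γ)
    (d : CommGroup.torsion Rˣ →* Γ)

theorem wd
    (hd : ∀ ζ : CommGroup.torsion Rˣ, ((ζ : Rˣ) : R) ∈ gr.comp (d ζ))
    (f : Γ →* CommGroup.torsion Rˣ) (hf : ∀ γ, f (d (f γ)) = f γ) :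
      ∃ A : Subring R,
        (A : Set R) = ((⨆ γ ∈ f.ker, gr.comp γ : AddSubgroup R) : Set R) ∧
        IsGpRg A (Subgroup.map (CommGroup.torsion Rˣ).subtype f.range) := by
  classical
  let S : AddSubgroup R := ⨆ γ ∈ f.ker, gr.comp γ
  have hle : ∀ γ, f γ = 1 → ∀ x ∈ gr.comp γ, x ∈ S := fun γ hγ x hx =>
    (le_iSup₂_of_le (f := fun γ (_ : γ ∈ f.ker) => gr.comp γ) γ hγ le_rfl) hx
  have hone : (1 : R) ∈ gr.comp 1 := by simpa using hd 1
  -- multiplication of an element of the degree-zero part by a homogeneous one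
  have hmul : ∀ γ, ∀ y ∈ gr.comp γ, ∀ x ∈ S,
      x * y ∈ (⨆ δ, ⨆ (_ : f δ = f γ), gr.comp δ : AddSubgroup R) := by
    intro γ y hy x hx
    have : S ≤ AddSubgroup.comap (AddMonoidHom.mulRight y)
        (⨆ δ, ⨆ (_ : f δ = f γ), gr.comp δ : AddSubgroup R) := by
      refine iSup₂_le fun δ hδ z hz => ?_
      have hδ' : f δ = 1 := hδ
      exact (le_iSup₂_of_le (f := fun δ' (_ : f δ' = f γ) => gr.comp δ') (δ * γ)
        (by simp [hδ']) le_rfl) (gr.mul_mem hz hy)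
    exact this hx
  let A : Subring R :=
    { S with
      one_mem' := hle 1 (map_one f) 1 hone
      mul_mem' := by
        intro x y hx hy
        have : S ≤ AddSubgroup.comap (AddMonoidHom.mulLeft x) S := by
          refine iSup₂_le fun δ hδ z hz => ?_
          have hδ' : f δ = 1 := hδ
          have := hmul δ z hz x hx
          rw [hδ'] at this
          exact this
        exact this hy }
  have hA : ∀ x, x ∈ A ↔ x ∈ S := fun x => Iff.rfl
  refine ⟨A, rfl, ?_, ?_⟩
  · rw [injective_iff_map_eq_zero]
    intro v hv
    ext ⟨g, hg⟩
    obtain ⟨ζ, ⟨γ, rfl⟩, rfl⟩ := hg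
    obtain ⟨p, hp1, hp2⟩ := gr.exists_proj (fun δ => f δ = f γ)
    have key : ∀ v : MonoidAlgebra A (Subgroup.map (CommGroup.torsion Rˣ).subtype f.range),
        p (gpRgHom A _ v) = ((v.coeff ⟨_, ⟨f γ, ⟨γ, rfl⟩, rfl⟩⟩ : A) : R) *
          (((f γ : CommGroup.torsion Rˣ) : Rˣ) : R) := by
      intro v
      induction v using MonoidAlgebra.induction_linear with
      | zero => simp
      | add a b ha hb => simp [ha, hb, add_mul]
      | single g a =>
        obtain ⟨g, ζ, ⟨δ, rfl⟩, rfl⟩ := g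
        rw [gpRgHom_single]
        have hm := hmul _ _ (hd (f δ)) a ((hA _).1 a.2)
        rw [hf] at hm
        by_cases h : f δ = f γ
        · have := proj_of_mem (p := p) (q := AddMonoidHom.id R)
            (fun δ' hδ' x hx => hp1 δ' (hδ'.trans h) x hx) hm
          have h2 : (⟨_, ⟨f δ, ⟨δ, rfl⟩, rfl⟩⟩ :
            Subgroup.map (CommGroup.torsion Rˣ).subtype f.range) =
            ⟨_, ⟨f γ, ⟨γ, rfl⟩, rfl⟩⟩ := by simp [h]
          rw [h2]
          simp only [Subgroup.subtype_apply] at this ⊢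
          rw [h] at this
          rw [this]
          simp
        · have := proj_of_mem (p := p) (q := 0)
            (fun δ' hδ' x hx => hp2 δ' (fun h' => h (hδ'.symm.trans h')) x hx) hm
          have h2 : (⟨_, ⟨f δ, ⟨δ, rfl⟩, rfl⟩⟩ :
            Subgroup.map (CommGroup.torsion Rˣ).subtype f.range) ≠
            ⟨_, ⟨f γ, ⟨γ, rfl⟩, rfl⟩⟩ := by
              intro h3
              exact h (Subtype.ext (Subtype.mk.inj h3))
          simp only [Subgroup.subtype_apply] at this h2 ⊢
          rw [this]
          simp [h2]
    have := key v
    rw [hv, map_zero, eq_comm, Units.mul_left_eq_zero] at this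
    simpa using this
  · intro x
    have hx : x ∈ iSup gr.comp := by rw [gr.iSup_eq_top]; trivial
    have : iSup gr.comp ≤ (gpRgHom A
        (Subgroup.map (CommGroup.torsion Rˣ).subtype f.range)).toAddMonoidHom.range := by
      refine iSup_le fun γ y hy => ?_
      have hm : y * (((f γ)⁻¹ : CommGroup.torsion Rˣ) : Rˣ) ∈ A := by
        refine (hA _).2 (hle _ ?_ _ (gr.mul_mem hy (hd (f γ)⁻¹)))
        simp [hf]
      refine ⟨MonoidAlgebra.single ⟨_, ⟨f γ, ⟨γ, rfl⟩, rfl⟩⟩ ⟨_, hm⟩, ?_⟩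
      have := gpRgHom_single A (Subgroup.map (CommGroup.torsion Rˣ).subtype f.range)
        ⟨_, ⟨f γ, ⟨γ, rfl⟩, rfl⟩⟩ ⟨_, hm⟩
      refine this.trans ?_
      simp
    exact this hx

theorem comp_mul_ne
    (hd : ∀ ζ : CommGroup.torsion Rˣ, ((ζ : Rˣ) : R) ∈ gr.comp (d ζ))
    {γ : Γ} (h : gr.comp γ ≠ ⊥) (ζ : CommGroup.torsion Rˣ) :
    gr.comp (γ * d ζ) ≠ ⊥ := by
  intro hb
  apply h
  rw [eq_bot_iff]
  intro x hx
  have := gr.mul_mem hx (hd ζ)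
  rw [hb, AddSubgroup.mem_bot, Units.mul_left_eq_zero] at this
  exact this

theorem mem_ker_of_le (f g : Γ →* CommGroup.torsion Rˣ)
    (h : (⨆ γ ∈ g.ker, gr.comp γ : AddSubgroup R) ≤ (⨆ γ ∈ f.ker, gr.comp γ : AddSubgroup R))
    {γ : Γ} (hγ : gr.comp γ ≠ ⊥) (hg : g γ = 1) : f γ = 1 := by
  by_contra hf
  apply hγ
  rw [eq_bot_iff]
  intro x hx
  obtain ⟨p, hp1, hp2⟩ := gr.exists_proj (fun δ => f δ = 1)
  have hx' := h ((le_iSup₂_of_le (f := fun γ (_ : γ ∈ g.ker) => gr.comp γ) γ hg le_rfl) hx)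
  have := proj_of_mem (p := p) (q := AddMonoidHom.id R) (fun δ hδ x hx => hp1 δ hδ x hx) hx'
  rw [hp2 γ hf x hx] at this
  exact this.symm

theorem ord
    (hd : ∀ ζ : CommGroup.torsion Rˣ, ((ζ : Rˣ) : R) ∈ gr.comp (d ζ))
    (hgr : gr.IsUniversal) (f g : Γ →* CommGroup.torsion Rˣ)
    (hg : ∀ γ, g (d (g γ)) = g γ) :
      (((∀ γ, f (d (g γ)) = f γ) ∧ (∀ γ, g (d (f γ)) = f γ)) ↔
        (Subgroup.map (CommGroup.torsion Rˣ).subtype f.range ≤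
            Subgroup.map (CommGroup.torsion Rˣ).subtype g.range ∧
          (⨆ γ ∈ g.ker, gr.comp γ : AddSubgroup R) ≤
            (⨆ γ ∈ f.ker, gr.comp γ : AddSubgroup R))) := by
  constructor
  · rintro ⟨h1, h2⟩
    refine ⟨Subgroup.map_mono ?_, ?_⟩
    · rintro _ ⟨γ, rfl⟩
      exact ⟨d (f γ), h2 γ⟩
    · refine iSup₂_le fun γ hγ => ?_
      have hγ' : g γ = 1 := hγ
      refine le_iSup₂_of_le γ ?_ le_rfl
      rw [MonoidHom.mem_ker, ← h1, hγ']
      simp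
  · rintro ⟨h1, h2⟩
    constructor
    · have : f.comp (d.comp g) = f := by
        apply hgr.hom_ext
        intro γ hγ
        have h3 := mem_ker_of_le gr f g h2 (comp_mul_ne gr d hd hγ (g γ)⁻¹) (by simp [hg])
        simp only [map_mul, map_inv] at h3
        exact (mul_inv_eq_one.1 h3).symm
      exact fun γ => DFunLike.congr_fun this γ
    · intro γ
      obtain ⟨_, ⟨δ, rfl⟩, hδ⟩ := h1 ⟨f γ, ⟨γ, rfl⟩, rfl⟩
      have : g δ = f γ := Subtype.ext hδ
      rw [← this, hg]

theorem surj
    (hd : ∀ ζ : CommGroup.torsion Rˣ, ((ζ : Rˣ) : R) ∈ gr.comp (d ζ))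
    [Module.Finite ℤ R] [Nontrivial R] (hgr : gr.IsUniversal)
    (A : Subring R) (G : Subgroup Rˣ) (h : IsGpRg A G) :
      ∃ f : Γ →* CommGroup.torsion Rˣ, (∀ γ, f (d (f γ)) = f γ) ∧
        (A : Set R) = ((⨆ γ ∈ f.ker, gr.comp γ : AddSubgroup R) : Set R) ∧
        G = Subgroup.map (CommGroup.torsion Rˣ).subtype f.range := by
  have hfin := h.finite
  let e : Shrink.{v} G ≃* G := Shrink.mulEquiv
  obtain ⟨s, hs⟩ := h.exists_grading e
  obtain ⟨F, hF, -⟩ := hgr _ inferInstance s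
  have hGt : G ≤ CommGroup.torsion Rˣ := by
    intro x hx
    have := isOfFinOrder_of_finite (⟨x, hx⟩ : G)
    exact G.subtype.isOfFinOrder this
  let f : Γ →* CommGroup.torsion Rˣ := (Subgroup.inclusion hGt).comp (e.toMonoidHom.comp F)
  have hfF : ∀ γ, ((f γ : CommGroup.torsion Rˣ) : Rˣ) = (e (F γ) : Rˣ) := fun γ => rfl
  have hfmem : ∀ γ, ((f γ : CommGroup.torsion Rˣ) : Rˣ) ∈ G := fun γ => (e (F γ)).2
  have hker : ∀ γ, γ ∈ f.ker ↔ F γ = 1 := by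
    intro γ
    rw [MonoidHom.mem_ker, Subtype.ext_iff, hfF]
    simp
  -- the key fact: degrees of elements of `G`
  have hdeg : ∀ ζ : CommGroup.torsion Rˣ, ∀ hζ : (ζ : Rˣ) ∈ G, f (d ζ) = ζ := by
    intro ζ hζ
    have h1 : ((ζ : Rˣ) : R) ∈ s.comp (F (d ζ)) := by
      rw [hF]
      exact (le_iSup₂_of_le (f := fun γ (_ : γ ∈ F ⁻¹' {F (d ζ)}) => gr.comp γ)
        (d ζ) rfl le_rfl) (hd ζ)
    have h2 : ((ζ : Rˣ) : R) ∈ s.comp (e.symm ⟨ζ, hζ⟩) := by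
      rw [hs]
      exact ⟨1, one_mem _, by simp⟩
    have h3 : F (d ζ) = e.symm ⟨ζ, hζ⟩ := by
      by_contra hne
      obtain ⟨p, hp1, hp2⟩ := s.exists_proj (fun ε => ε = F (d ζ))
      have h4 := hp1 _ rfl _ h1
      rw [hp2 _ (Ne.symm hne) _ h2] at h4
      exact (ζ : Rˣ).ne_zero h4.symm
    apply Subtype.ext
    rw [hfF, h3]
    simp
  refine ⟨f, fun γ => hdeg _ (hfmem γ), ?_, ?_⟩
  · have h1 : (⨆ γ ∈ f.ker, gr.comp γ : AddSubgroup R) = s.comp 1 := by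
      rw [hF]
      refine iSup_congr fun γ => ?_
      refine iSup_congr_Prop ?_ fun _ => rfl
      rw [hker]; rfl
    rw [h1]
    ext x
    simp [hs]
  · ext x
    constructor
    · intro hx
      exact ⟨⟨x, hGt hx⟩, ⟨d ⟨x, hGt hx⟩, hdeg _ hx⟩, rfl⟩
    · rintro ⟨_, ⟨γ, rfl⟩, rfl⟩
      exact hfmem γ

end main

end helpers

/-- Let `R` be a connected reduced order with universal grading
`(Γ, (R_γ))` and degree map `d : μ(R) → Γ`. The map `Φ` sending
`f ∈ Id₀(d) = {f ∈ Hom(Γ, μ(R)) : f∘d∘f = f}` to `(⊕_{γ ∈ ker f} R_γ, f(Γ))` is well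
defined (its values lie in `GpRg(R)`) and is an isomorphism of partially ordered sets from
`Id₀(d)` (ordered by `f ≤ g ↔ f∘d∘g = f ∧ g∘d∘f = f`) onto `GpRg(R)` (ordered by
`(B,H) ≤ (A,G) ↔ H ⊆ G ∧ B ⊇ A`). -/
theorem id0_equiv_gpRg
    {R : Type u} [CommRing R] [Module.Free ℤ R] [Module.Finite ℤ R] [IsReduced R]
    (hconn : IsConnectedRing R)
    {Γ : Type v} [CommGroup Γ] (gr : Grading R Γ) (hgr : gr.IsUniversal)
    (d : CommGroup.torsion Rˣ →* Γ)
    (hd : ∀ ζ : CommGroup.torsion Rˣ, ((ζ : Rˣ) : R) ∈ gr.comp (d ζ)) :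
    -- well-definedness: each `f ∈ Id₀(d)` yields an element `Φ(f) ∈ GpRg(R)`
    (∀ f : Γ →* CommGroup.torsion Rˣ, (∀ γ, f (d (f γ)) = f γ) →
      ∃ A : Subring R,
        (A : Set R) = ((⨆ γ ∈ f.ker, gr.comp γ : AddSubgroup R) : Set R) ∧
        IsGpRg A (Subgroup.map (CommGroup.torsion Rˣ).subtype f.range)) ∧
    -- injectivity of `Φ`
    (∀ f g : Γ →* CommGroup.torsion Rˣ,
      (∀ γ, f (d (f γ)) = f γ) → (∀ γ, g (d (g γ)) = g γ) →
      (⨆ γ ∈ f.ker, gr.comp γ : AddSubgroup R) = (⨆ γ ∈ g.ker, gr.comp γ : AddSubgroup R) →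
      Subgroup.map (CommGroup.torsion Rˣ).subtype f.range =
        Subgroup.map (CommGroup.torsion Rˣ).subtype g.range →
      f = g) ∧
    -- surjectivity of `Φ` onto `GpRg(R)`
    (∀ (A : Subring R) (G : Subgroup Rˣ), IsGpRg A G →
      ∃ f : Γ →* CommGroup.torsion Rˣ, (∀ γ, f (d (f γ)) = f γ) ∧
        (A : Set R) = ((⨆ γ ∈ f.ker, gr.comp γ : AddSubgroup R) : Set R) ∧
        G = Subgroup.map (CommGroup.torsion Rˣ).subtype f.range) ∧
    -- `Φ` and its inverse are order preserving
    (∀ f g : Γ →* CommGroup.torsion Rˣ,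
      (∀ γ, f (d (f γ)) = f γ) → (∀ γ, g (d (g γ)) = g γ) →
      (((∀ γ, f (d (g γ)) = f γ) ∧ (∀ γ, g (d (f γ)) = f γ)) ↔
        (Subgroup.map (CommGroup.torsion Rˣ).subtype f.range ≤
            Subgroup.map (CommGroup.torsion Rˣ).subtype g.range ∧
          (⨆ γ ∈ g.ker, gr.comp γ : AddSubgroup R) ≤
            (⨆ γ ∈ f.ker, gr.comp γ : AddSubgroup R)))) := by
  have := hconn.1
  refine ⟨fun f hf => wd gr d hd f hf, ?_, fun A G h => surj gr d hd hgr A G h,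
    fun f g _ hg => ord gr d hd hgr f g hg⟩
  intro f g hf hg h1 h2
  have a := (ord gr d hd hgr f g hg).2 ⟨h2.le, h1.ge⟩
  have b := (ord gr d hd hgr g f hf).2 ⟨h2.ge, h1.le⟩
  ext γ
  rw [← a.2 γ, b.1 γ]
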